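/- arXiv:2105.09565 — 2 statements merged into one kernel-verified Lean document; each statement's English description precedes it below -/
import Mathlib

section
/- Let f be a Rademacher random multiplicative function and let ε > 0 be sufficiently small. For ℓ ≥ 2 define the event D_ℓ := { sup over indices i with X_{ℓ−1} < x_{i−1} ≤ X_ℓ of (1/(√(x_{i−1})·R(x_{i−1}))) · sup_{x_{i−1} < x ≤ x_i} |∑_{x_{i−1} < n ≤ x, P(n) > √x} f(n)| > 2 }. There exists a constant C = C(ε) > 0 such that for all sufficiently large ℓ (in terms of ε), ℙ(D_ℓ) ≤ C · 2^{−(ℓ−1)^K · (1/3 − 68ε/3)/ε}. -/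
open MeasureTheory ProbabilityTheory

noncomputable section

/-- The largest prime factor of `n`, with `P 1 = 1` (and `P 0 = 1`). -/
def Pfac (n : ℕ) : ℕ := if n ≤ 1 then 1 else n.primeFactors.sup id

/-- A Rademacher random multiplicative function. -/
structure IsRademacherRMF {Ω : Type*} [MeasurableSpace Ω] (μ : Measure Ω)
    (f : Ω → ℕ → ℝ) : Prop where
  meas : ∀ n : ℕ, Measurable fun ω => f ω n
  indep : iIndepFun (m := fun _ : Nat.Primes => (inferInstance : MeasurableSpace ℝ))
    (fun (p : Nat.Primes) (ω : Ω) => f ω (p : ℕ)) μ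
  prob_one : ∀ p : ℕ, p.Prime → μ {ω | f ω p = 1} = 1 / 2
  prob_neg_one : ∀ p : ℕ, p.Prime → μ {ω | f ω p = -1} = 1 / 2
  eq_zero_of_not_squarefree : ∀ (ω : Ω) (n : ℕ), ¬Squarefree n → f ω n = 0
  eq_prod_of_squarefree : ∀ (ω : Ω) (n : ℕ), Squarefree n →
    f ω n = ∏ p ∈ n.primeFactors, f ω p

/-- The test points `x_i := ⌊exp(i^ε)⌋`. -/
def testPoint (ε : ℝ) (i : ℕ) : ℕ := ⌊Real.exp ((i : ℝ) ^ ε)⌋₊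

/-- `X_ℓ := exp(2^{ℓ^K})` with `K = 1/(4ε)` (here `ℓ` is a real number). -/
def Xpt (ε ℓ : ℝ) : ℝ := Real.exp ((2 : ℝ) ^ (ℓ ^ (1 / (4 * ε))))

/-- `R(x) := (log log x)^{1/4+ε}`. -/
def Rbd (ε x : ℝ) : ℝ := Real.log (Real.log x) ^ ((1 : ℝ) / 4 + ε)

/-- measurable and a.e. bounded -/
def BddRV {Ω : Type*} [MeasurableSpace Ω] (μ : Measure Ω) (G : Ω → ℝ) : Prop :=
  Measurable G ∧ ∃ C : ℝ, ∀ᵐ ω ∂μ, |G ω| ≤ C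

section
variable {Ω : Type*} [MeasurableSpace Ω] {μ : Measure Ω}

lemma BddRV.const (c : ℝ) : BddRV μ (fun _ => c) :=
  ⟨measurable_const, |c|, by simp⟩

lemma BddRV.mul {G H : Ω → ℝ} (hG : BddRV μ G) (hH : BddRV μ H) :
    BddRV μ (fun ω => G ω * H ω) := by
  obtain ⟨mG, C, hC⟩ := hG
  obtain ⟨mH, D, hD⟩ := hH
  refine ⟨mG.mul mH, C * D, ?_⟩
  filter_upwards [hC, hD] with ω h1 h2
  rw [abs_mul]
  exact mul_le_mul h1 h2 (abs_nonneg _) ((abs_nonneg _).trans h1)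

lemma BddRV.add {G H : Ω → ℝ} (hG : BddRV μ G) (hH : BddRV μ H) :
    BddRV μ (fun ω => G ω + H ω) := by
  obtain ⟨mG, C, hC⟩ := hG
  obtain ⟨mH, D, hD⟩ := hH
  refine ⟨mG.add mH, C + D, ?_⟩
  filter_upwards [hC, hD] with ω h1 h2
  exact (abs_add_le _ _).trans (add_le_add h1 h2)

lemma BddRV.pow {G : Ω → ℝ} (hG : BddRV μ G) (n : ℕ) :
    BddRV μ (fun ω => G ω ^ n) := by
  induction n with
  | zero => simpa using BddRV.const (μ := μ) 1
  | succ n ih => simpa [pow_succ] using ih.mul hG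

lemma BddRV.sum {α : Type*} (s : Finset α) {G : α → Ω → ℝ} (h : ∀ a ∈ s, BddRV μ (G a)) :
    BddRV μ (fun ω => ∑ a ∈ s, G a ω) := by
  classical
  induction s using Finset.induction_on with
  | empty => simpa using BddRV.const (μ := μ) 0
  | insert a s ha ih =>
    simp only [Finset.sum_insert ha]
    exact (h a (Finset.mem_insert_self a s)).add
      (ih fun b hb => h b (Finset.mem_insert_of_mem hb))

lemma BddRV.prod {α : Type*} (s : Finset α) {G : α → Ω → ℝ} (h : ∀ a ∈ s, BddRV μ (G a)) :
    BddRV μ (fun ω => ∏ a ∈ s, G a ω) := by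
  classical
  induction s using Finset.induction_on with
  | empty => simpa using BddRV.const (μ := μ) 1
  | insert a s ha ih =>
    simp only [Finset.prod_insert ha]
    exact (h a (Finset.mem_insert_self a s)).mul
      (ih fun b hb => h b (Finset.mem_insert_of_mem hb))

lemma BddRV.integrable [IsProbabilityMeasure μ] {G : Ω → ℝ} (hG : BddRV μ G) :
    Integrable G μ := by
  obtain ⟨mG, C, hC⟩ := hG
  exact Integrable.of_bound mG.aestronglyMeasurable C (by simpa [Real.norm_eq_abs] using hC)

lemma integral_sq_mul_sq_le [IsProbabilityMeasure μ] {G H : Ω → ℝ} (hG : BddRV μ G)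
    (hH : BddRV μ H) {g h : ℝ} (g0 : 0 ≤ g) (h0 : 0 ≤ h)
    (hg : ∫ ω, G ω ^ 4 ∂μ ≤ g ^ 2) (hh : ∫ ω, H ω ^ 4 ∂μ ≤ h ^ 2) :
    ∫ ω, G ω ^ 2 * H ω ^ 2 ∂μ ≤ g * h := by
  have key : ∀ s : ℝ, 0 ≤ (∫ ω, G ω ^ 4 ∂μ) * (s * s) +
      (-2 * ∫ ω, G ω ^ 2 * H ω ^ 2 ∂μ) * s + ∫ ω, H ω ^ 4 ∂μ := by
    intro s
    have e : ∫ ω, (G ω ^ 2 * s - H ω ^ 2) ^ 2 ∂μ = (∫ ω, G ω ^ 4 ∂μ) * (s * s) +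
      (-2 * ∫ ω, G ω ^ 2 * H ω ^ 2 ∂μ) * s + ∫ ω, H ω ^ 4 ∂μ := by
      have : ∀ ω, (G ω ^ 2 * s - H ω ^ 2) ^ 2 =
        (s * s) * G ω ^ 4 + (-2 * s) * (G ω ^ 2 * H ω ^ 2) + H ω ^ 4 := fun ω => by ring
      simp only [this]
      rw [integral_add, integral_add, integral_const_mul, integral_const_mul]
      · ring
      · exact ((BddRV.const _).mul (hG.pow 4)).integrable
      · exact ((BddRV.const _).mul ((hG.pow 2).mul (hH.pow 2))).integrable
      · exact (((BddRV.const _).mul (hG.pow 4)).add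
          ((BddRV.const _).mul ((hG.pow 2).mul (hH.pow 2)))).integrable
      · exact (hH.pow 4).integrable
    rw [← e]
    exact integral_nonneg fun ω => sq_nonneg _
  have d := discrim_le_zero key
  have p1 : 0 ≤ ∫ ω, H ω ^ 4 ∂μ := integral_nonneg fun ω => by positivity
  have p2 : (∫ ω, G ω ^ 4 ∂μ) * (∫ ω, H ω ^ 4 ∂μ) ≤ g ^ 2 * h ^ 2 :=
    mul_le_mul hg hh p1 (by positivity)
  unfold discrim at d
  refine le_of_sq_le_sq ?_ (by positivity)
  nlinarith

theorem bonami [IsProbabilityMeasure μ] {ι : Type*} [DecidableEq ι] (ξ : ι → Ω → ℝ)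
    (hm : ∀ i, Measurable (ξ i)) (hi : iIndepFun ξ μ) (h1 : ∀ i, ∀ᵐ ω ∂μ, ξ i ω ^ 2 = 1)
    (h0 : ∀ i, ∫ ω, ξ i ω ∂μ = 0) (P : Finset ι) : ∀ c : Finset ι → ℝ,
    ∫ ω, (∑ T ∈ P.powerset, c T * ∏ i ∈ T, ξ i ω) ^ 4 ∂μ ≤
      (∑ T ∈ P.powerset, c T ^ 2 * 3 ^ T.card) ^ 2 := by
  have hB : ∀ i, BddRV μ (ξ i) := fun i => ⟨hm i, 1, by
    filter_upwards [h1 i] with ω h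
    exact (sq_le_one_iff_abs_le_one _).1 h.le⟩
  have hpoly : ∀ (Q : Finset ι) (c : Finset ι → ℝ),
      BddRV μ (fun ω => ∑ T ∈ Q.powerset, c T * ∏ i ∈ T, ξ i ω) := fun Q c =>
    BddRV.sum _ fun T _ => (BddRV.const _).mul (BddRV.prod _ fun i _ => hB i)
  induction P using Finset.induction_on with
  | empty =>
    intro c
    simp
    apply le_of_eq; ring
  | insert p P hp ih =>
    intro c
    set G : Ω → ℝ := fun ω => ∑ T ∈ P.powerset, c T * ∏ i ∈ T, ξ i ω with hGd
    set H : Ω → ℝ := fun ω => ∑ T ∈ P.powerset, c (insert p T) * ∏ i ∈ T, ξ i ω with hHd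
    have hG : BddRV μ G := hpoly P c
    have hH : BddRV μ H := hpoly P fun T => c (insert p T)
    set g := ∑ T ∈ P.powerset, c T ^ 2 * 3 ^ T.card with hgd
    set h := ∑ T ∈ P.powerset, c (insert p T) ^ 2 * 3 ^ T.card with hhd
    have g0 : 0 ≤ g := Finset.sum_nonneg fun _ _ => by positivity
    have hh0 : 0 ≤ h := Finset.sum_nonneg fun _ _ => by positivity
    have hg : ∫ ω, G ω ^ 4 ∂μ ≤ g ^ 2 := ih c
    have hh : ∫ ω, H ω ^ 4 ∂μ ≤ h ^ 2 := ih fun T => c (insert p T)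
    have hgh := integral_sq_mul_sq_le hG hH g0 hh0 hg hh
    have hnot : ∀ T ∈ P.powerset, p ∉ T := fun T hT hpT => hp (Finset.mem_powerset.1 hT hpT)
    have hF : ∀ ω, ∑ T ∈ (insert p P).powerset, c T * ∏ i ∈ T, ξ i ω = G ω + ξ p ω * H ω := by
      intro ω
      rw [Finset.sum_powerset_insert hp, hGd, hHd, Finset.mul_sum]
      congr 1
      refine Finset.sum_congr rfl fun T hT => ?_
      rw [Finset.prod_insert (hnot T hT)]; ring
    have hW : ∑ T ∈ (insert p P).powerset, c T ^ 2 * (3:ℝ) ^ T.card = g + 3 * h := by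
      rw [Finset.sum_powerset_insert hp, hgd, hhd, Finset.mul_sum]
      congr 1
      refine Finset.sum_congr rfl fun T hT => ?_
      rw [Finset.card_insert_of_notMem (hnot T hT)]; ring
    set K : Ω → ℝ := fun ω => 4 * (G ω ^ 3 * H ω) + 4 * (G ω * H ω ^ 3) with hKd
    have hK : BddRV μ K := ((BddRV.const 4).mul ((hG.pow 3).mul hH)).add
      ((BddRV.const 4).mul (hG.mul (hH.pow 3)))
    have hind : IndepFun (ξ p) K μ := by
      have I := hi.indepFun_finset {p} P (by simpa using hp) hm
      let φ : (({p} : Finset ι) → ℝ) → ℝ := fun y => y ⟨p, by simp⟩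
      let E : (↥P → ℝ) → ι → ℝ := fun y i => if h : i ∈ P then y ⟨i, h⟩ else 0
      have hE : ∀ i, Measurable fun y => E y i := by
        intro i
        by_cases h : i ∈ P
        · simp only [E, h, dif_pos]; fun_prop
        · simp only [E, h, dif_neg, not_false_eq_true]; fun_prop
      let A : (Finset ι → ℝ) → (↥P → ℝ) → ℝ :=
        fun c y => ∑ T ∈ P.powerset, c T * ∏ i ∈ T, E y i
      have hA : ∀ c, Measurable (A c) := fun c =>
        Finset.measurable_fun_sum _ fun T _ => measurable_const.mul
          (Finset.measurable_fun_prod _ fun i _ => hE i)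
      let c' : Finset ι → ℝ := fun T => c (insert p T)
      let ψ : (↥P → ℝ) → ℝ := fun y =>
        4 * (A c y ^ 3 * A c' y) + 4 * (A c y * A c' y ^ 3)
      have hψ : Measurable ψ := by
        have := hA c
        have := hA c'
        fun_prop
      have I2 := I.comp (φ := φ) (ψ := ψ) (by fun_prop) hψ
      have hAe : ∀ (c : Finset ι → ℝ) ω, A c (fun i : P => ξ i ω) =
          ∑ T ∈ P.powerset, c T * ∏ i ∈ T, ξ i ω := by
        intro c ω
        refine Finset.sum_congr rfl fun T hT => ?_
        congr 1
        refine Finset.prod_congr rfl fun i hiT => ?_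
        simp [E, Finset.mem_powerset.1 hT hiT]
      have e1 : ψ ∘ (fun ω (i : P) => ξ i ω) = K := by
        funext ω
        simp only [Function.comp, ψ, hAe, hKd, hGd, hHd, c']
      have e2 : φ ∘ (fun ω (i : ({p} : Finset ι)) => ξ i ω) = ξ p := by
        funext ω; simp [φ]
      rw [e1, e2] at I2
      exact I2
    have hz : ∫ ω, ξ p ω * K ω ∂μ = 0 := by
      rw [hind.integral_fun_mul_eq_mul_integral (hm p).aestronglyMeasurable
        hK.1.aestronglyMeasurable, h0, zero_mul]
    simp only [hF]
    rw [hW]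
    have e : ∫ ω, (G ω + ξ p ω * H ω) ^ 4 ∂μ =
        ∫ ω, G ω ^ 4 + 6 * (G ω ^ 2 * H ω ^ 2) + H ω ^ 4 + ξ p ω * K ω ∂μ := by
      refine integral_congr_ae ?_
      filter_upwards [h1 p] with ω h
      have h3 : ξ p ω ^ 3 = ξ p ω := by rw [pow_succ, h, one_mul]
      have h4 : ξ p ω ^ 4 = 1 := by rw [show (4:ℕ) = 2 * 2 from rfl, pow_mul, h, one_pow]
      have : (G ω + ξ p ω * H ω) ^ 4 = G ω ^ 4 + 4 * ξ p ω * G ω ^ 3 * H ω +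
        6 * ξ p ω ^ 2 * (G ω ^ 2 * H ω ^ 2) + 4 * ξ p ω ^ 3 * G ω * H ω ^ 3 +
        ξ p ω ^ 4 * H ω ^ 4 := by ring
      simp only [this, h3, h4, h, hKd]; ring
    rw [e, integral_add, integral_add, integral_add, integral_const_mul, hz]
    · nlinarith [sq_nonneg h]
    · exact (hG.pow 4).integrable
    · exact ((BddRV.const 6).mul ((hG.pow 2).mul (hH.pow 2))).integrable
    · exact ((hG.pow 4).add ((BddRV.const 6).mul ((hG.pow 2).mul (hH.pow 2)))).integrable
    · exact (hH.pow 4).integrable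
    · exact (((hG.pow 4).add ((BddRV.const 6).mul ((hG.pow 2).mul (hH.pow 2)))).add
        (hH.pow 4)).integrable
    · exact ((hB p).mul hK).integrable
end

/-- weight `3^ω(n)` on squarefree `n`. -/
def wt (n : ℕ) : ℝ := if Squarefree n then (3 : ℝ) ^ n.primeFactors.card else 0

lemma wt_nonneg (n : ℕ) : 0 ≤ wt n := by
  unfold wt; split_ifs <;> positivity

section
variable {Ω : Type*} [MeasurableSpace Ω] {μ : Measure Ω} [IsProbabilityMeasure μ]
  {f : Ω → ℕ → ℝ}

lemma rmf_ae (hf : IsRademacherRMF μ f) (p : ℕ) (hp : p.Prime) :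
    ∀ᵐ ω ∂μ, f ω p = 1 ∨ f ω p = -1 := by
  have m1 : MeasurableSet {ω | f ω p = 1} := hf.meas p (measurableSet_singleton 1)
  have m2 : MeasurableSet {ω | f ω p = -1} := hf.meas p (measurableSet_singleton (-1))
  have hd : Disjoint {ω | f ω p = 1} {ω | f ω p = -1} := by
    rw [Set.disjoint_left]
    intro ω h1 h2
    simp only [Set.mem_ofPred_eq] at h1 h2
    linarith
  have : μ ({ω | f ω p = 1} ∪ {ω | f ω p = -1}) = 1 := by
    rw [measure_union hd m2, hf.prob_one p hp, hf.prob_neg_one p hp, ENNReal.add_halves]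
  exact (prob_compl_eq_zero_iff (m1.union m2)).2 this

lemma rmf_integral (hf : IsRademacherRMF μ f) (p : ℕ) (hp : p.Prime) :
    ∫ ω, f ω p ∂μ = 0 := by
  have m1 : MeasurableSet {ω | f ω p = 1} := hf.meas p (measurableSet_singleton 1)
  have m2 : MeasurableSet {ω | f ω p = -1} := hf.meas p (measurableSet_singleton (-1))
  have e : ∫ ω, f ω p ∂μ = ∫ ω, ({ω | f ω p = 1}.indicator (fun _ => (1:ℝ)) ω -
      {ω | f ω p = -1}.indicator (fun _ => (1:ℝ)) ω) ∂μ := by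
    refine integral_congr_ae ?_
    filter_upwards [rmf_ae hf p hp] with ω h
    rcases h with h | h
    · simp [Set.indicator, h]; norm_num
    · simp [Set.indicator, h]; norm_num
  rw [e, integral_sub]
  · rw [integral_indicator_const _ m1, integral_indicator_const _ m2]
    simp [Measure.real, hf.prob_one p hp, hf.prob_neg_one p hp]
  · exact (integrable_const _).indicator m1
  · exact (integrable_const _).indicator m2

lemma rmf_bdd (hf : IsRademacherRMF μ f) (n : ℕ) : BddRV μ (fun ω => f ω n) := by
  by_cases hn : Squarefree n
  · simp only [fun ω => hf.eq_prod_of_squarefree ω n hn]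
    refine BddRV.prod _ fun p hp => ⟨hf.meas p, 1, ?_⟩
    filter_upwards [rmf_ae hf p (Nat.prime_of_mem_primeFactors hp)] with ω h
    rcases h with h | h <;> simp [h]
  · simp only [fun ω => hf.eq_zero_of_not_squarefree ω n hn]
    exact BddRV.const 0

lemma rmf_fourth (hf : IsRademacherRMF μ f) (A : Finset ℕ) :
    ∫ ω, (∑ n ∈ A, f ω n) ^ 4 ∂μ ≤ (∑ n ∈ A, wt n) ^ 2 := by
  classical
  let B := A.filter Squarefree
  let T : ℕ → Finset Nat.Primes := fun n => Finset.subtype Nat.Prime n.primeFactors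
  have hTp : ∀ n (g : ℕ → ℝ), ∏ p ∈ T n, g (p : ℕ) = ∏ p ∈ n.primeFactors, g p := fun n g =>
    Finset.prod_subtype_of_mem g fun p hp => Nat.prime_of_mem_primeFactors hp
  have hTm : ∀ n, (T n).map (Function.Embedding.subtype Nat.Prime) = n.primeFactors := fun n =>
    Finset.subtype_map_of_mem fun p hp => Nat.prime_of_mem_primeFactors hp
  have hTc : ∀ n, (T n).card = n.primeFactors.card := fun n => by
    exact (Finset.card_map _).symm.trans (congrArg Finset.card (hTm n))
  have hinj : Set.InjOn T B := by
    intro a ha b hb hab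
    have ha' : Squarefree a := (Finset.mem_filter.1 ha).2
    have hb' : Squarefree b := (Finset.mem_filter.1 hb).2
    rw [← Nat.prod_primeFactors_of_squarefree ha', ← Nat.prod_primeFactors_of_squarefree hb',
      ← hTm a, ← hTm b, hab]
  let Q : Finset Nat.Primes := B.biUnion T
  let c : Finset Nat.Primes → ℝ := fun U => if U ∈ B.image T then 1 else 0
  have hsub : B.image T ⊆ Q.powerset := by
    intro U hU
    obtain ⟨n, hn, rfl⟩ := Finset.mem_image.1 hU
    exact Finset.mem_powerset.2 (Finset.subset_biUnion_of_mem T hn)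
  have hsum : ∀ g : Finset Nat.Primes → ℝ,
      ∑ U ∈ Q.powerset, (if U ∈ B.image T then g U else 0) = ∑ n ∈ B, g (T n) := by
    intro g
    rw [Finset.sum_ite_mem, Finset.inter_eq_right.2 hsub, Finset.sum_image hinj]
  have key := bonami (μ := μ) (fun (p : Nat.Primes) ω => f ω p) (fun p => hf.meas p) hf.indep
    (fun p => by
      filter_upwards [rmf_ae hf p p.2] with ω h
      rcases h with h | h <;> simp [h]) (fun p => rmf_integral hf p p.2) Q c
  have e1 : ∀ ω, ∑ U ∈ Q.powerset, c U * ∏ p ∈ U, f ω p = ∑ n ∈ A, f ω n := by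
    intro ω
    have := hsum fun U => ∏ p ∈ U, f ω p
    simp only [c, ite_mul, one_mul, zero_mul]
    rw [this, Finset.sum_filter]
    refine Finset.sum_congr rfl fun n _ => ?_
    split_ifs with h
    · rw [hTp n (f ω), hf.eq_prod_of_squarefree ω n h]
    · rw [hf.eq_zero_of_not_squarefree ω n h]
  have e2 : ∑ U ∈ Q.powerset, c U ^ 2 * (3:ℝ) ^ U.card = ∑ n ∈ A, wt n := by
    have := hsum fun U => (3:ℝ) ^ U.card
    simp only [c, ite_pow, one_pow, ite_mul, one_mul, ne_eq, OfNat.ofNat_ne_zero,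
      not_false_eq_true, zero_pow, zero_mul]
    rw [this, Finset.sum_filter]
    refine Finset.sum_congr rfl fun n _ => ?_
    simp [wt, hTc]
  rw [e2] at key
  simpa only [e1] using key

lemma rmf_markov (hf : IsRademacherRMF μ f) (A : Finset ℕ) {η : ℝ} (hη : 0 < η) :
    μ {ω | η < |∑ n ∈ A, f ω n|} ≤ ENNReal.ofReal ((∑ n ∈ A, wt n) ^ 2 / η ^ 4) := by
  have h := mul_meas_ge_le_integral_of_nonneg (μ := μ) (f := fun ω => (∑ n ∈ A, f ω n) ^ 4)
    (Filter.Eventually.of_forall fun ω => by positivity)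
    ((BddRV.sum A fun n _ => rmf_bdd hf n).pow 4).integrable (η ^ 4)
  have h2 := h.trans (rmf_fourth hf A)
  have h3 : μ.real {ω | η ^ 4 ≤ (∑ n ∈ A, f ω n) ^ 4} ≤ (∑ n ∈ A, wt n) ^ 2 / η ^ 4 := by
    rw [le_div_iff₀ (by positivity), mul_comm]; exact h2
  calc μ {ω | η < |∑ n ∈ A, f ω n|} ≤ μ {ω | η ^ 4 ≤ (∑ n ∈ A, f ω n) ^ 4} := by
        refine measure_mono fun ω hω => ?_
        simp only [Set.mem_ofPred_eq] at hω ⊢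
        rw [← Even.pow_abs (by decide : Even 4) (∑ n ∈ A, f ω n)]
        exact pow_le_pow_left₀ hη.le hω.le 4
    _ = ENNReal.ofReal (μ.real {ω | η ^ 4 ≤ (∑ n ∈ A, f ω n) ^ 4}) := by
        rw [Measure.real, ENNReal.ofReal_toReal (measure_ne_top _ _)]
    _ ≤ _ := ENNReal.ofReal_le_ofReal h3

lemma dyadic_chain (η : ℝ) (r : ℕ) : ∀ F : ℕ → ℝ,
    (∀ t ≤ r, ∀ m < 2 ^ (r - t), |F ((m + 1) * 2 ^ t) - F (m * 2 ^ t)| ≤ η) →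
    ∀ k ≤ 2 ^ r, |F k - F 0| ≤ (r + 1) * η := by
  induction r with
  | zero =>
    intro F h k hk
    have h0 := h 0 le_rfl 0 (by norm_num)
    simp at h0
    have : 0 ≤ η := (abs_nonneg _).trans h0
    simp at hk
    interval_cases k
    · simpa using this
    · simpa using h0
  | succ r ih =>
    intro F h k hk
    have h0 := h 0 (Nat.zero_le _)
    simp at h0
    have hη : 0 ≤ η := (abs_nonneg _).trans (h0 0 (by positivity))
    have h1 := ih (fun k => F (2 * k)) (by
      intro t ht m hm
      have := h (t + 1) (by omega) m (by simpa using hm)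
      have e : ∀ a : ℕ, 2 * (a * 2 ^ t) = a * 2 ^ (t + 1) := fun a => by ring
      simpa only [e] using this) (k / 2) (by rw [pow_succ] at hk; omega)
    simp only [mul_zero] at h1
    have h2 : |F k - F (2 * (k / 2))| ≤ η := by
      rcases Nat.even_or_odd' k with ⟨a, rfl | rfl⟩
      · simpa using hη
      · have e : (2 * a + 1) / 2 = a := by omega
        rw [e]
        exact h0 (2 * a) (by omega)
    have h3 := abs_sub_le (F k) (F (2 * (k / 2))) (F 0)
    push_cast
    linarith

lemma sum_sq_le_sq_sum' {α : Type*} (s : Finset α) (a : α → ℝ) (ha : ∀ i ∈ s, 0 ≤ a i) :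
    ∑ i ∈ s, a i ^ 2 ≤ (∑ i ∈ s, a i) ^ 2 := by
  rw [sq, Finset.sum_mul]
  refine Finset.sum_le_sum fun i hi => ?_
  rw [sq]
  exact mul_le_mul_of_nonneg_left (Finset.single_le_sum ha hi) (ha i hi)

lemma maximal (hf : IsRademacherRMF μ f) (N : Finset ℕ) (τ : ℕ → ℕ) (u r : ℕ)
    (hτ : ∀ n ∈ N, u < τ n) {lam : ℝ} (hl : 0 < lam) :
    μ {ω | ∃ k ≤ 2 ^ r, lam < |∑ n ∈ N.filter (fun n => τ n ≤ u + k), f ω n|} ≤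
      ENNReal.ofReal ((r + 1) ^ 5 * (∑ n ∈ N, wt n) ^ 2 / lam ^ 4) := by
  classical
  set η : ℝ := lam / (r + 1) with hη
  have hη0 : 0 < η := by positivity
  let A : ℕ → ℕ → Finset ℕ := fun t m =>
    N.filter (fun n => u + m * 2 ^ t < τ n ∧ τ n ≤ u + (m + 1) * 2 ^ t)
  have hsub : {ω | ∃ k ≤ 2 ^ r, lam < |∑ n ∈ N.filter (fun n => τ n ≤ u + k), f ω n|} ⊆
      ⋃ t ∈ Finset.range (r + 1), ⋃ m ∈ Finset.range (2 ^ (r - t)),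
        {ω | η < |∑ n ∈ A t m, f ω n|} := by
    rintro ω ⟨k, hk, hlt⟩
    by_contra hcon
    simp only [Set.mem_iUnion, Set.mem_ofPred_eq, not_exists, not_lt, Finset.mem_range] at hcon
    have := dyadic_chain η r (fun k => ∑ n ∈ N.filter (fun n => τ n ≤ u + k), f ω n) (by
      intro t ht m hm
      have h := hcon t (by omega) m hm
      have e : ∑ n ∈ N.filter (fun n => τ n ≤ u + (m + 1) * 2 ^ t), f ω n -
          ∑ n ∈ N.filter (fun n => τ n ≤ u + m * 2 ^ t), f ω n = ∑ n ∈ A t m, f ω n := by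
        simp only [A, Finset.sum_filter, ← Finset.sum_sub_distrib]
        refine Finset.sum_congr rfl fun n _ => ?_
        have : m * 2 ^ t ≤ (m + 1) * 2 ^ t := Nat.mul_le_mul_right _ (Nat.le_succ m)
        by_cases h1 : τ n ≤ u + m * 2 ^ t
        · have h2 : τ n ≤ u + (m + 1) * 2 ^ t := by omega
          simp [h1, h2]
        · simp [h1, not_le.1 h1]
      simp only [e]; exact h) k hk
    have z : ∑ n ∈ N.filter (fun n => τ n ≤ u + 0), f ω n = 0 := by
      rw [Finset.filter_false_of_mem, Finset.sum_empty]
      intro n hn; have := hτ n hn; omega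
    simp only [z, sub_zero] at this
    have e2 : ((r:ℝ) + 1) * η = lam := by rw [hη]; field_simp
    rw [e2] at this
    linarith
  have hdis : ∀ t, ∑ m ∈ Finset.range (2 ^ (r - t)), (∑ n ∈ A t m, wt n) ^ 2 ≤
      (∑ n ∈ N, wt n) ^ 2 := by
    intro t
    refine (sum_sq_le_sq_sum' _ _ fun m _ => Finset.sum_nonneg fun n _ => wt_nonneg n).trans ?_
    refine pow_le_pow_left₀ (Finset.sum_nonneg fun m _ =>
      Finset.sum_nonneg fun n _ => wt_nonneg n) ?_ 2
    rw [← Finset.sum_biUnion]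
    · refine Finset.sum_le_sum_of_subset_of_nonneg ?_ fun n _ _ => wt_nonneg n
      intro n hn
      obtain ⟨m, _, hm⟩ := Finset.mem_biUnion.1 hn
      exact (Finset.mem_filter.1 hm).1
    · intro m _ m' _ hne
      rw [Function.onFun, Finset.disjoint_left]
      intro n hn hn'
      obtain ⟨-, h1, h2⟩ := Finset.mem_filter.1 hn
      obtain ⟨-, h3, h4⟩ := Finset.mem_filter.1 hn'
      have a1 : m * 2 ^ t < (m' + 1) * 2 ^ t := by omega
      have a2 : m' * 2 ^ t < (m + 1) * 2 ^ t := by omega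
      have := lt_of_mul_lt_mul_right a1 (Nat.zero_le _)
      have := lt_of_mul_lt_mul_right a2 (Nat.zero_le _)
      omega
  calc _ ≤ μ (⋃ t ∈ Finset.range (r + 1), ⋃ m ∈ Finset.range (2 ^ (r - t)),
        {ω | η < |∑ n ∈ A t m, f ω n|}) := measure_mono hsub
    _ ≤ ∑ t ∈ Finset.range (r + 1), ∑ m ∈ Finset.range (2 ^ (r - t)),
        μ {ω | η < |∑ n ∈ A t m, f ω n|} :=
      (measure_biUnion_finset_le _ _).trans
        (Finset.sum_le_sum fun t _ => measure_biUnion_finset_le _ _)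
    _ ≤ ∑ t ∈ Finset.range (r + 1), ∑ m ∈ Finset.range (2 ^ (r - t)),
        ENNReal.ofReal ((∑ n ∈ A t m, wt n) ^ 2 / η ^ 4) :=
      Finset.sum_le_sum fun t _ => Finset.sum_le_sum fun m _ => rmf_markov hf _ hη0
    _ = ENNReal.ofReal (∑ t ∈ Finset.range (r + 1), ∑ m ∈ Finset.range (2 ^ (r - t)),
        ((∑ n ∈ A t m, wt n) ^ 2 / η ^ 4)) := by
      rw [ENNReal.ofReal_sum_of_nonneg fun t _ => Finset.sum_nonneg fun m _ => by positivity]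
      refine Finset.sum_congr rfl fun t _ => ?_
      rw [ENNReal.ofReal_sum_of_nonneg fun m _ => by positivity]
    _ ≤ _ := by
      refine ENNReal.ofReal_le_ofReal ?_
      calc _ ≤ ∑ t ∈ Finset.range (r + 1), ((∑ n ∈ N, wt n) ^ 2 / η ^ 4) := by
            refine Finset.sum_le_sum fun t _ => ?_
            rw [← Finset.sum_div]
            exact div_le_div_of_nonneg_right (hdis t) (by positivity)
        _ = _ := by
            rw [Finset.sum_const, Finset.card_range, nsmul_eq_mul, hη]
            push_cast
            field_simp
end

/-- the pairs used to majorize `3^ω`. -/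
def prs (v : ℕ) : Finset (ℕ × ℕ) :=
  (Finset.Icc 1 v ×ˢ Finset.Icc 1 v).filter (fun q => (q.1 * q.2) ^ 3 ≤ v ^ 2)

lemma wt_le (v n : ℕ) (hn : 1 ≤ n) (hnv : n ≤ v) :
    wt n ≤ 3 * (((prs v).filter (fun q => q.1 * q.2 ∣ n)).card : ℝ) := by
  classical
  unfold wt
  split_ifs with hs
  swap
  · positivity
  have hc : (Nat.finMulAntidiag 3 n).card = 3 ^ n.primeFactors.card := by
    rw [Nat.card_finMulAntidiag_of_squarefree hs, ArithmeticFunction.cardDistinctFactors_apply]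
    rfl
  have hle : (Nat.finMulAntidiag 3 n).card ≤
      (Finset.range 3 ×ˢ ((prs v).filter (fun q => q.1 * q.2 ∣ n))).card := by
    let φ : (Fin 3 → ℕ) → ℕ × (ℕ × ℕ) := fun t =>
      if n ≤ t 0 ^ 3 then (0, (t 1, t 2)) else
      if n ≤ t 1 ^ 3 then (1, (t 0, t 2)) else (2, (t 0, t 1))
    have aux : ∀ a b c : ℕ, a * b * c = n → n ≤ c ^ 3 →
        (a, b) ∈ (prs v).filter (fun q => q.1 * q.2 ∣ n) := by
      intro a b c h hc
      have ha : a ∣ n := ⟨b * c, by rw [← h]; ring⟩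
      have hb : b ∣ n := ⟨a * c, by rw [← h]; ring⟩
      have hab : a * b ∣ n := ⟨c, h.symm⟩
      simp only [prs, Finset.mem_filter, Finset.mem_product, Finset.mem_Icc]
      refine ⟨⟨⟨⟨Nat.pos_of_dvd_of_pos ha hn, (Nat.le_of_dvd hn ha).trans hnv⟩,
        ⟨Nat.pos_of_dvd_of_pos hb hn, (Nat.le_of_dvd hn hb).trans hnv⟩⟩, ?_⟩, hab⟩
      have h3 : (a * b) ^ 3 * n ≤ n ^ 2 * n := by
        calc (a * b) ^ 3 * n ≤ (a * b) ^ 3 * c ^ 3 := Nat.mul_le_mul_left _ hc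
          _ = n ^ 2 * n := by rw [← mul_pow, h]; ring
      exact (Nat.le_of_mul_le_mul_right h3 hn).trans (Nat.pow_le_pow_left hnv 2)
    refine Finset.card_le_card_of_injOn φ ?_ ?_
    · intro t ht
      have ht' := (Nat.mem_finMulAntidiag.1 ht).1
      rw [Fin.prod_univ_three] at ht'
      simp only [Finset.coe_product, Set.mem_prod, Finset.mem_coe, φ]
      split_ifs with h0 h1
      · exact ⟨by simp, aux _ _ (t 0) (by rw [← ht']; ring) h0⟩
      · exact ⟨by simp, aux _ _ (t 1) (by rw [← ht']; ring) h1⟩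
      · refine ⟨by simp, aux _ _ (t 2) (by rw [← ht']) ?_⟩
        by_contra h2
        push Not at h0 h1 h2
        have p1 : t 0 ^ 3 * t 1 ^ 3 * t 2 ^ 3 < n * n * n :=
          Nat.mul_lt_mul'' (Nat.mul_lt_mul'' h0 h1) h2
        have p2 : t 0 ^ 3 * t 1 ^ 3 * t 2 ^ 3 = n * n * n := by
          calc _ = (t 0 * t 1 * t 2) ^ 3 := by ring
            _ = _ := by rw [ht']; ring
        omega
    · intro t ht s hs' hts
      have ht' := (Nat.mem_finMulAntidiag.1 ht).1
      have hs'' := (Nat.mem_finMulAntidiag.1 hs').1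
      rw [Fin.prod_univ_three] at ht' hs''
      have canc : ∀ a b c d : ℕ, a * b * c = n → a * b * d = n → c = d := by
        intro a b c d h1 h2
        have : 0 < a * b := by
          rcases Nat.eq_zero_or_pos (a * b) with h | h
          · rw [h, zero_mul] at h1; omega
          · exact h
        exact Nat.eq_of_mul_eq_mul_left this (h1.trans h2.symm)
      have fin : t 0 = s 0 → t 1 = s 1 → t 2 = s 2 → t = s := by
        intro h0 h1 h2
        funext i
        fin_cases i
        · exact h0
        · exact h1
        · exact h2
      simp only [φ] at hts
      split_ifs at hts <;> simp only [Prod.mk.injEq] at hts <;> try omega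
      · obtain ⟨-, h1, h2⟩ := hts
        refine fin (canc (t 1) (t 2) _ _ (by rw [← ht']; ring) ?_) h1 h2
        rw [h1, h2, ← hs'']; ring
      · obtain ⟨-, h1, h2⟩ := hts
        refine fin h1 (canc (t 0) (t 2) _ _ (by rw [← ht']; ring) ?_) h2
        rw [h1, h2, ← hs'']; ring
      · obtain ⟨-, h1, h2⟩ := hts
        refine fin h1 h2 (canc (t 0) (t 1) _ _ ht' ?_)
        rw [h1, h2, ← hs'']
  rw [hc, Finset.card_product, Finset.card_range] at hle
  exact_mod_cast hle

lemma count_mult (u v d : ℕ) (huv : u ≤ v) (hd : 0 < d) :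
    (((Finset.Ioc u v).filter (fun n => d ∣ n)).card : ℝ) ≤ ((v : ℝ) - u) / d + 1 := by
  have h1 : ((Finset.Ioc u v).filter (fun n => d ∣ n)).card ≤ (Finset.Ioc (u / d) (v / d)).card := by
    refine Finset.card_le_card_of_injOn (fun n => n / d) ?_ ?_
    · intro n hn
      simp only [Finset.coe_filter, Set.mem_ofPred_eq, Finset.mem_Ioc] at hn
      obtain ⟨⟨h1, h2⟩, c, rfl⟩ := hn
      simp only [Finset.coe_Ioc, Set.mem_Ioc]
      rw [Nat.mul_div_cancel_left _ hd]
      refine ⟨?_, ?_⟩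
      · rw [Nat.div_lt_iff_lt_mul hd, mul_comm]; exact h1
      · rw [Nat.le_div_iff_mul_le hd, mul_comm]; exact h2
    · intro a ha b hb hab
      simp only [Finset.coe_filter, Set.mem_ofPred_eq, Finset.mem_Ioc] at ha hb
      exact Nat.div_left_inj ha.2 hb.2 |>.1 hab
  rw [Nat.card_Ioc] at h1
  have h2 : (((v / d - u / d : ℕ)) : ℝ) ≤ ((v : ℝ) - u) / d + 1 := by
    rw [Nat.cast_sub (Nat.div_le_div_right huv)]
    have a1 : ((v / d : ℕ) : ℝ) ≤ v / d := Nat.cast_div_le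
    have a2 : (u : ℝ) / d < (u / d : ℕ) + 1 := by
      rw [div_lt_iff₀ (by positivity)]
      have := Nat.lt_div_mul_add (a := u) hd
      have h : u < (u / d + 1) * d := by rw [add_mul, one_mul]; exact this
      exact_mod_cast h
    rw [sub_div]; linarith
  exact le_trans (by exact_mod_cast h1) h2

lemma harm_bd (v : ℕ) : ∑ a ∈ Finset.Icc 1 v, (1 : ℝ) / a ≤ 1 + Real.log v := by
  have := harmonic_le_one_add_log v
  rw [harmonic_eq_sum_Icc] at this
  push_cast at this
  simpa [one_div] using this

lemma wt_sum (u v : ℕ) (huv : u ≤ v) :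
    ∑ n ∈ Finset.Ioc u v, wt n ≤
      3 * (((v : ℝ) - u + (v : ℝ) ^ ((2 : ℝ) / 3)) * (1 + Real.log v) ^ 2) := by
  classical
  have huv' : (u : ℝ) ≤ v := by exact_mod_cast huv
  calc ∑ n ∈ Finset.Ioc u v, wt n
      ≤ ∑ n ∈ Finset.Ioc u v, 3 * (((prs v).filter (fun q => q.1 * q.2 ∣ n)).card : ℝ) := by
        refine Finset.sum_le_sum fun n hn => ?_
        rw [Finset.mem_Ioc] at hn
        exact wt_le v n (by omega) hn.2
    _ = 3 * ∑ q ∈ prs v, (((Finset.Ioc u v).filter (fun n => q.1 * q.2 ∣ n)).card : ℝ) := by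
        rw [← Finset.mul_sum]
        congr 1
        simp only [Finset.card_filter, Nat.cast_sum]
        rw [Finset.sum_comm]
    _ ≤ 3 * ∑ q ∈ prs v, ((v : ℝ) - u + (v : ℝ) ^ ((2 : ℝ) / 3)) * ((1 / q.1) * (1 / q.2)) := by
        refine mul_le_mul_of_nonneg_left (Finset.sum_le_sum fun q hq => ?_) (by norm_num)
        simp only [prs, Finset.mem_filter, Finset.mem_product, Finset.mem_Icc] at hq
        obtain ⟨⟨⟨h1, -⟩, ⟨h2, -⟩⟩, h3⟩ := hq
        have hpos : 0 < q.1 * q.2 := Nat.mul_pos h1 h2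
        refine (count_mult u v _ huv hpos).trans ?_
        have hpos' : (0 : ℝ) < ((q.1 * q.2 : ℕ) : ℝ) := by exact_mod_cast hpos
        have h4 : ((q.1 * q.2 : ℕ) : ℝ) ≤ (v : ℝ) ^ ((2 : ℝ) / 3) := by
          have h5 : ((q.1 * q.2 : ℕ) : ℝ) ^ (3 : ℕ) ≤ (v : ℝ) ^ (2 : ℕ) := by exact_mod_cast h3
          have h6 : ((v : ℝ) ^ ((2 : ℝ) / 3)) ^ (3 : ℕ) = (v : ℝ) ^ (2 : ℕ) := by
            rw [← Real.rpow_natCast, ← Real.rpow_mul (Nat.cast_nonneg v), ← Real.rpow_natCast]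
            norm_num
          rw [← h6] at h5
          exact le_of_pow_le_pow_left₀ (by norm_num) (by positivity) h5
        have e : ((1 : ℝ) / q.1) * (1 / q.2) = 1 / ((q.1 * q.2 : ℕ) : ℝ) := by
          push_cast; rw [one_div_mul_one_div]
        rw [e, mul_one_div, add_div]
        have : 1 ≤ (v : ℝ) ^ ((2 : ℝ) / 3) / ((q.1 * q.2 : ℕ) : ℝ) := by
          rwa [le_div_iff₀ hpos', one_mul]
        linarith
    _ ≤ 3 * (((v : ℝ) - u + (v : ℝ) ^ ((2 : ℝ) / 3)) * (1 + Real.log v) ^ 2) := by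
        rw [← Finset.mul_sum]
        have hnn : 0 ≤ (v : ℝ) - u + (v : ℝ) ^ ((2 : ℝ) / 3) :=
          add_nonneg (by linarith) (by positivity)
        refine mul_le_mul_of_nonneg_left (mul_le_mul_of_nonneg_left ?_ hnn) (by norm_num)
        calc ∑ q ∈ prs v, ((1 : ℝ) / q.1) * (1 / q.2)
            ≤ ∑ q ∈ Finset.Icc 1 v ×ˢ Finset.Icc 1 v, ((1 : ℝ) / q.1) * (1 / q.2) :=
              Finset.sum_le_sum_of_subset_of_nonneg (Finset.filter_subset _ _)
                fun q _ _ => by positivity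
          _ = (∑ a ∈ Finset.Icc 1 v, (1 : ℝ) / a) ^ 2 := by
              rw [Finset.sum_product, sq, Finset.sum_mul_sum]
          _ ≤ _ := pow_le_pow_left₀ (Finset.sum_nonneg fun a _ => by positivity) (harm_bd v) 2

lemma block {Ω : Type*} [MeasurableSpace Ω] {μ : Measure Ω} [IsProbabilityMeasure μ]
    {f : Ω → ℕ → ℝ} (hf : IsRademacherRMF μ f) (u v r : ℕ) (hu : 1 ≤ u)
    (hr : v ≤ 2 ^ r) :
    μ {ω | ∃ x : ℝ, (u : ℝ) < x ∧ x ≤ (v : ℝ) ∧ 2 * Real.sqrt u <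
      |∑ n ∈ (Finset.Ioc u ⌊x⌋₊).filter (fun n : ℕ => Real.sqrt x < (Pfac n : ℝ)), f ω n|} ≤
    ENNReal.ofReal (2 * ((r + 1) ^ 5 * (∑ n ∈ Finset.Ioc u v, wt n) ^ 2 / (u : ℝ) ^ 2)) := by
  classical
  have hu0 : (0 : ℝ) < u := by exact_mod_cast hu
  have hs : 0 < Real.sqrt u := Real.sqrt_pos.2 hu0
  have h4 : Real.sqrt u ^ 4 = (u : ℝ) ^ 2 := by
    rw [show (4 : ℕ) = 2 * 2 from rfl, pow_mul, Real.sq_sqrt hu0.le]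
  have m1 := maximal hf (Finset.Ioc u v) (fun n => n) u r
    (fun n hn => (Finset.mem_Ioc.1 hn).1) hs
  have m2 := maximal hf (Finset.Ioc u v) (fun n => max n (Pfac n ^ 2)) u r
    (fun n hn => lt_max_of_lt_left (Finset.mem_Ioc.1 hn).1) hs
  rw [h4] at m1 m2
  rw [two_mul ((_ : ℝ) * _ / _), ENNReal.ofReal_add (by positivity) (by positivity)]
  refine le_trans (measure_mono ?_) ((measure_union_le _ _).trans (add_le_add m1 m2))
  rintro ω ⟨x, hux, hxv, hlt⟩
  have hx0 : 0 ≤ x := hu0.le.trans hux.le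
  have hfu : u ≤ ⌊x⌋₊ := Nat.le_floor hux.le
  have hfv : ⌊x⌋₊ ≤ v := Nat.floor_le_of_le hxv
  have hk : ⌊x⌋₊ - u ≤ 2 ^ r := by omega
  have hk2 : u + (⌊x⌋₊ - u) = ⌊x⌋₊ := by omega
  have hsplit : ∑ n ∈ (Finset.Ioc u ⌊x⌋₊).filter (fun n : ℕ => Real.sqrt x < (Pfac n : ℝ)), f ω n =
      ∑ n ∈ (Finset.Ioc u v).filter (fun n => n ≤ u + (⌊x⌋₊ - u)), f ω n -
      ∑ n ∈ (Finset.Ioc u v).filter (fun n => max n (Pfac n ^ 2) ≤ u + (⌊x⌋₊ - u)), f ω n := by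
    rw [hk2]
    have e : Finset.Ioc u ⌊x⌋₊ = (Finset.Ioc u v).filter (fun n => n ≤ ⌊x⌋₊) := by
      ext n
      simp only [Finset.mem_Ioc, Finset.mem_filter]
      omega
    rw [e, Finset.filter_filter]
    simp only [Finset.sum_filter, ← Finset.sum_sub_distrib]
    refine Finset.sum_congr rfl fun n _ => ?_
    have hP : Real.sqrt x < (Pfac n : ℝ) ↔ ¬ (Pfac n ^ 2 ≤ ⌊x⌋₊) := by
      rw [Nat.le_floor_iff hx0, not_le, Real.sqrt_lt' ]
      · push_cast; rfl
      · have : 0 < Pfac n := by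
          unfold Pfac
          split_ifs with h
          · exact one_pos
          · push Not at h
            obtain ⟨p, hp⟩ := Nat.nonempty_primeFactors.2 h
            exact lt_of_lt_of_le (Nat.prime_of_mem_primeFactors hp).pos
              (Finset.le_sup (f := id) hp)
        exact_mod_cast this
    by_cases h1 : n ≤ ⌊x⌋₊ <;> by_cases h2 : Pfac n ^ 2 ≤ ⌊x⌋₊ <;> simp [hP, h1, h2]
  rw [hsplit] at hlt
  by_contra hcon
  simp only [Set.mem_union, Set.mem_ofPred_eq, not_or, not_exists, not_and, not_lt] at hcon
  have a1 := hcon.1 _ hk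
  have a2 := hcon.2 _ hk
  have a3 := abs_sub (∑ n ∈ (Finset.Ioc u v).filter (fun n => n ≤ u + (⌊x⌋₊ - u)), f ω n)
    (∑ n ∈ (Finset.Ioc u v).filter (fun n => max n (Pfac n ^ 2) ≤ u + (⌊x⌋₊ - u)), f ω n)
  linarith

lemma asymp (ε : ℝ) (h0 : 0 < ε) (h1 : ε < 1 / 100) :
    ∃ J : ℕ, 1 ≤ J ∧ ∀ j : ℕ, J ≤ j → ∃ r : ℕ,
      1 ≤ testPoint ε j ∧ testPoint ε (j + 1) ≤ 2 ^ r ∧ 1 ≤ Rbd ε (testPoint ε j) ∧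
      2 * (((r : ℝ) + 1) ^ 5 * (∑ n ∈ Finset.Ioc (testPoint ε j) (testPoint ε (j + 1)), wt n) ^ 2 /
        (testPoint ε j : ℝ) ^ 2) ≤ 2 * 6 ^ 5 * 324 ^ 2 * (j : ℝ) ^ (-(3 / 2) : ℝ) := by
  have t1 : ∀ᶠ x : ℝ in Filter.atTop, Real.log x ≤ x ^ ε / 3 := by
    have := (isLittleO_log_rpow_atTop h0).bound (show (0:ℝ) < 1 / 3 by norm_num)
    filter_upwards [this, Filter.eventually_ge_atTop 1] with x hx hx1
    rw [Real.norm_eq_abs, Real.norm_eq_abs, abs_of_nonneg (Real.rpow_nonneg (by linarith) _)] at hx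
    linarith [le_abs_self (Real.log x)]
  have t2 : ∀ᶠ x : ℝ in Filter.atTop, 4 ≤ x ^ ε :=
    (tendsto_rpow_atTop h0).eventually_ge_atTop 4
  obtain ⟨J, hJ⟩ := Filter.eventually_atTop.1
    (tendsto_natCast_atTop_atTop.eventually (t1.and t2))
  refine ⟨max J 1, le_max_right _ _, fun j hj => ?_⟩
  obtain ⟨hlog, hT4⟩ := hJ j (le_trans (le_max_left _ _) hj)
  have hj1 : 1 ≤ j := le_trans (le_max_right _ _) hj
  have hj1' : (1 : ℝ) ≤ j := by exact_mod_cast hj1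
  have hj0 : (0 : ℝ) < j := by linarith
  set T : ℝ := (j : ℝ) ^ ε with hT
  set δ : ℝ := (j : ℝ) ^ (ε - 1) with hδ
  have hδ0 : 0 < δ := Real.rpow_pos_of_pos hj0 _
  have hδ1 : δ ≤ 1 := Real.rpow_le_one_of_one_le_of_nonpos hj1' (by linarith)
  set E : ℝ := Real.exp T with hE
  set u := testPoint ε j with hu
  set v := testPoint ε (j + 1) with hv
  have hE0 : 0 < E := Real.exp_pos _
  -- increments
  have hinc : ((j + 1 : ℕ) : ℝ) ^ ε ≤ T + δ := by
    have e : ((j + 1 : ℕ) : ℝ) = j * (1 + 1 / j) := by push_cast; field_simp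
    rw [e, Real.mul_rpow hj0.le (by positivity)]
    have b := rpow_one_add_le_one_add_mul_self (s := 1 / (j : ℝ))
      (by linarith [show (0:ℝ) ≤ 1 / j by positivity]) h0.le (by linarith : ε ≤ 1)
    have d : δ = T * (1 / j) := by rw [hδ, hT, Real.rpow_sub_one hj0.ne']; ring
    have hp : 0 ≤ T * (1 / j) := by positivity
    calc (j : ℝ) ^ ε * (1 + 1 / j) ^ ε ≤ T * (1 + ε * (1 / j)) :=
          mul_le_mul_of_nonneg_left b (by positivity)
      _ = T + ε * (T * (1 / j)) := by ring
      _ ≤ T + δ := by rw [d]; nlinarith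
  have hexpδ : Real.exp δ ≤ 1 + 2 * δ := by
    have := Real.abs_exp_sub_one_le (x := δ) (by rw [abs_of_pos hδ0]; exact hδ1)
    rw [abs_of_pos hδ0] at this
    linarith [le_abs_self (Real.exp δ - 1)]
  have hvE : (v : ℝ) ≤ E * (1 + 2 * δ) := by
    calc (v : ℝ) ≤ Real.exp (((j + 1 : ℕ) : ℝ) ^ ε) := Nat.floor_le (Real.exp_pos _).le
      _ ≤ Real.exp (T + δ) := Real.exp_le_exp.2 hinc
      _ = E * Real.exp δ := Real.exp_add _ _
      _ ≤ _ := mul_le_mul_of_nonneg_left hexpδ hE0.le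
  have hE5 : 5 ≤ E := by linarith [Real.add_one_le_exp T]
  have huE : E - 1 < u := Nat.sub_one_lt_floor _
  have huv : u ≤ v := by
    refine Nat.floor_mono (Real.exp_le_exp.2 (Real.rpow_le_rpow hj0.le ?_ h0.le))
    push_cast; linarith
  have hu2 : E / 2 ≤ u := by linarith
  have hu1 : 1 ≤ u := by
    have : (0 : ℝ) < u := by linarith
    exact_mod_cast this
  have hu0 : (0 : ℝ) < u := by exact_mod_cast hu1
  have hv0 : (0 : ℝ) < v := by exact_mod_cast (lt_of_lt_of_le hu1 huv)
  have huv' : (u : ℝ) ≤ v := by exact_mod_cast huv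
  -- E^{2/3} ≤ δ E
  have hE23 : E ^ ((2 : ℝ) / 3) ≤ δ * E := by
    have a : (j : ℝ) ^ (1 - ε) ≤ E ^ ((1 : ℝ) / 3) := by
      calc (j : ℝ) ^ (1 - ε) ≤ (j : ℝ) ^ (1 : ℝ) :=
            Real.rpow_le_rpow_of_exponent_le hj1' (by linarith)
        _ = Real.exp (Real.log j) := by rw [Real.rpow_one, Real.exp_log hj0]
        _ ≤ Real.exp (T / 3) := Real.exp_le_exp.2 hlog
        _ = E ^ ((1 : ℝ) / 3) := by rw [hE, ← Real.exp_mul]; congr 1; ring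
    have b : δ * (j : ℝ) ^ (1 - ε) = 1 := by
      rw [hδ, ← Real.rpow_add hj0]; simp
    have c : E ^ ((2 : ℝ) / 3) * E ^ ((1 : ℝ) / 3) = E := by
      rw [← Real.rpow_add hE0]; norm_num
    have c0 : 0 ≤ E ^ ((2 : ℝ) / 3) := by positivity
    calc E ^ ((2 : ℝ) / 3) = δ * (E ^ ((2 : ℝ) / 3) * (j : ℝ) ^ (1 - ε)) := by
          rw [mul_left_comm, b, mul_one]
      _ ≤ δ * (E ^ ((2 : ℝ) / 3) * E ^ ((1 : ℝ) / 3)) := by gcongr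
      _ = δ * E := by rw [c]
  have hδE : 1 ≤ δ * E := le_trans (Real.one_le_rpow (by linarith) (by norm_num)) hE23
  have hv3 : (v : ℝ) ≤ 3 * E := by nlinarith
  have hv23 : (v : ℝ) ^ ((2 : ℝ) / 3) ≤ 3 * (δ * E) := by
    calc (v : ℝ) ^ ((2 : ℝ) / 3) ≤ (3 * E) ^ ((2 : ℝ) / 3) :=
          Real.rpow_le_rpow hv0.le hv3 (by norm_num)
      _ = 3 ^ ((2 : ℝ) / 3) * E ^ ((2 : ℝ) / 3) := Real.mul_rpow (by norm_num) hE0.le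
      _ ≤ 3 * (δ * E) := by
          refine mul_le_mul ?_ hE23 (by positivity) (by norm_num)
          calc (3 : ℝ) ^ ((2 : ℝ) / 3) ≤ 3 ^ (1 : ℝ) :=
                Real.rpow_le_rpow_of_exponent_le (by norm_num) (by norm_num)
            _ = 3 := Real.rpow_one _
  have hlen : (v : ℝ) - u + (v : ℝ) ^ ((2 : ℝ) / 3) ≤ 12 * (δ * u) := by
    have : (v : ℝ) - u ≤ 3 * (δ * E) := by linarith
    have h6 : δ * E ≤ 2 * (δ * u) := by nlinarith
    linarith
  have hlogv : Real.log v ≤ T + 1 := by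
    calc Real.log v ≤ Real.log (Real.exp (T + 1)) := by
          refine Real.log_le_log hv0 ?_
          calc (v : ℝ) ≤ Real.exp (((j + 1 : ℕ) : ℝ) ^ ε) := Nat.floor_le (Real.exp_pos _).le
            _ ≤ _ := Real.exp_le_exp.2 (by linarith)
      _ = T + 1 := Real.log_exp _
  have hlogv0 : 0 ≤ Real.log v := Real.log_nonneg (by exact_mod_cast (le_trans hu1 huv))
  refine ⟨Nat.log 2 v + 1, hu1, (Nat.lt_pow_succ_log_self (by norm_num) v).le, ?_, ?_⟩
  · unfold Rbd
    refine Real.one_le_rpow ?_ (by linarith)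
    have hlu : T - 1 ≤ Real.log u := by
      have h2 : Real.exp (T - 1) ≤ u := by
        refine le_trans ?_ hu2
        rw [Real.exp_sub, ← hE]
        exact div_le_div_of_nonneg_left hE0.le (by norm_num)
          (by linarith [Real.exp_one_gt_d9])
      calc T - 1 = Real.log (Real.exp (T - 1)) := (Real.log_exp _).symm
        _ ≤ _ := Real.log_le_log (Real.exp_pos _) h2
    calc (1 : ℝ) = Real.log (Real.exp 1) := (Real.log_exp _).symm
      _ ≤ _ := Real.log_le_log (Real.exp_pos _) (by linarith [Real.exp_one_lt_d9])
  · have hr : ((Nat.log 2 v + 1 : ℕ) : ℝ) + 1 ≤ 6 * T := by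
      have hp : (2 : ℕ) ^ Nat.log 2 v ≤ v := Nat.pow_log_le_self 2 (by omega)
      have hp' : (2 : ℝ) ^ Nat.log 2 v ≤ v := by exact_mod_cast hp
      have hl := Real.log_le_log (by positivity) hp'
      rw [Real.log_pow] at hl
      have l2 := Real.log_two_gt_d9
      have : (0:ℝ) ≤ (Nat.log 2 v : ℝ) := Nat.cast_nonneg _
      push_cast
      nlinarith
    have hW := wt_sum u v huv
    have hW0 : 0 ≤ ∑ n ∈ Finset.Ioc u v, wt n := Finset.sum_nonneg fun n _ => wt_nonneg n
    have hT0 : 0 < T := by linarith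
    have hW2 : ∑ n ∈ Finset.Ioc u v, wt n ≤ 324 * (δ * T ^ 2) * u := by
      refine hW.trans ?_
      calc 3 * (((v : ℝ) - u + (v : ℝ) ^ ((2 : ℝ) / 3)) * (1 + Real.log v) ^ 2)
          ≤ 3 * ((12 * (δ * u)) * (3 * T) ^ 2) := by
            refine mul_le_mul_of_nonneg_left ?_ (by norm_num)
            refine mul_le_mul hlen ?_ (by positivity) (by positivity)
            exact pow_le_pow_left₀ (by linarith) (by linarith) 2
        _ = 324 * (δ * T ^ 2) * u := by ring
    have hpw : T ^ 9 * δ ^ 2 ≤ (j : ℝ) ^ (-(3 / 2) : ℝ) := by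
      rw [hT, hδ, ← Real.rpow_natCast, ← Real.rpow_natCast, ← Real.rpow_mul hj0.le,
        ← Real.rpow_mul hj0.le, ← Real.rpow_add hj0]
      refine Real.rpow_le_rpow_of_exponent_le hj1' ?_
      push_cast
      linarith
    calc 2 * ((((Nat.log 2 v + 1 : ℕ) : ℝ) + 1) ^ 5 * (∑ n ∈ Finset.Ioc u v, wt n) ^ 2 /
          (u : ℝ) ^ 2)
        ≤ 2 * ((6 * T) ^ 5 * (324 * (δ * T ^ 2) * u) ^ 2 / (u : ℝ) ^ 2) := by
          gcongr
      _ = 2 * 6 ^ 5 * 324 ^ 2 * (T ^ 9 * δ ^ 2) := by field_simp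
      _ ≤ _ := by gcongr

/-- For `ε > 0` sufficiently small and sufficiently large `ℓ`,
`ℙ(𝓓_ℓ) ≪_ε 2^{-(ℓ-1)^K (1/3 - 68ε/3)/ε}`. -/
theorem event_D_rademacher
    {Ω : Type*} [MeasurableSpace Ω] (μ : Measure Ω) [IsProbabilityMeasure μ]
    (f : Ω → ℕ → ℝ) (hf : IsRademacherRMF μ f) :
    ∃ ε₀ : ℝ, 0 < ε₀ ∧ ∀ ε : ℝ, 0 < ε → ε < ε₀ →
      ∃ C : ℝ, 0 < C ∧ ∃ L : ℕ, ∀ ℓ : ℕ, L ≤ ℓ → 2 ≤ ℓ →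
        μ {ω | ∃ i : ℕ, 2 ≤ i ∧
              Xpt ε ((ℓ : ℝ) - 1) < (testPoint ε (i - 1) : ℝ) ∧
              (testPoint ε (i - 1) : ℝ) ≤ Xpt ε (ℓ : ℝ) ∧
              ∃ x : ℝ, (testPoint ε (i - 1) : ℝ) < x ∧ x ≤ (testPoint ε i : ℝ) ∧
                2 * (Real.sqrt (testPoint ε (i - 1)) * Rbd ε (testPoint ε (i - 1))) <
                  |∑ n ∈ (Finset.Ioc (testPoint ε (i - 1)) ⌊x⌋₊).filter
                      (fun n : ℕ => Real.sqrt x < (Pfac n : ℝ)), f ω n|} ≤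
          ENNReal.ofReal (C *
            (2 : ℝ) ^ (-(((ℓ : ℝ) - 1) ^ (1 / (4 * ε)) *
              (1 / 3 - 68 * ε / 3) / ε))) := by
  refine ⟨1 / 100, by norm_num, fun ε h0 h1 => ?_⟩
  obtain ⟨J, hJ1, hJ⟩ := asymp ε h0 h1
  have hsum : Summable fun j : ℕ => (j : ℝ) ^ (-(7 / 6) : ℝ) :=
    Real.summable_nat_rpow.2 (by norm_num)
  have hSpos : 0 < ∑' j : ℕ, (j : ℝ) ^ (-(7 / 6) : ℝ) :=
    hsum.tsum_pos (fun j => by positivity) 1 (by norm_num)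
  set S := ∑' j : ℕ, (j : ℝ) ^ (-(7 / 6) : ℝ) with hS
  set C0 : ℝ := 2 * 6 ^ 5 * 324 ^ 2 with hC0
  have hC0p : 0 < C0 := by norm_num [hC0]
  refine ⟨C0 * S, by positivity, J + 1, fun ℓ hℓ hℓ2 => ?_⟩
  set Y : ℝ := ((ℓ : ℝ) - 1) ^ (1 / (4 * ε)) with hY
  set a : ℝ := 1 / 3 - 68 * ε / 3 with ha
  have ha0 : 0 ≤ a := by linarith
  set B : ℝ := (2 : ℝ) ^ Y with hB
  set D : ℝ := (2 : ℝ) ^ (-(Y * a / ε)) with hD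
  have hD0 : 0 ≤ D := by positivity
  have hB0 : 0 < B := by positivity
  have hDB : D = B ^ (-(a / ε)) := by
    rw [hD, hB, ← Real.rpow_mul (by norm_num)]; congr 1; ring
  have hBJ : (J : ℝ) ≤ B := by
    have l1 : ((J + 1 : ℕ) : ℝ) ≤ ℓ := by exact_mod_cast hℓ
    push_cast at l1
    have l2 : ((2 : ℕ) : ℝ) ≤ ℓ := by exact_mod_cast hℓ2
    push_cast at l2
    have y1 : (J : ℝ) ≤ Y := by
      calc (J : ℝ) ≤ (ℓ : ℝ) - 1 := by linarith
        _ = ((ℓ : ℝ) - 1) ^ (1 : ℝ) := (Real.rpow_one _).symm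
        _ ≤ Y := Real.rpow_le_rpow_of_exponent_le (by linarith) (by
            rw [le_div_iff₀ (by positivity)]; linarith)
    calc (J : ℝ) ≤ (2 : ℝ) ^ J := by
          exact_mod_cast (Nat.lt_two_pow_self (n := J)).le
      _ = (2 : ℝ) ^ (J : ℝ) := (Real.rpow_natCast _ _).symm
      _ ≤ B := Real.rpow_le_rpow_of_exponent_le (by norm_num) y1
  let Ev : ℕ → Set Ω := fun j => {ω | 1 ≤ j ∧ Xpt ε ((ℓ : ℝ) - 1) < (testPoint ε j : ℝ) ∧
    ∃ x : ℝ, (testPoint ε j : ℝ) < x ∧ x ≤ (testPoint ε (j + 1) : ℝ) ∧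
      2 * (Real.sqrt (testPoint ε j) * Rbd ε (testPoint ε j)) <
        |∑ n ∈ (Finset.Ioc (testPoint ε j) ⌊x⌋₊).filter
          (fun n : ℕ => Real.sqrt x < (Pfac n : ℝ)), f ω n|}
  have hEv : ∀ j, μ (Ev j) ≤ ENNReal.ofReal (C0 * D * (j : ℝ) ^ (-(7 / 6) : ℝ)) := by
    intro j
    by_cases hc : 1 ≤ j ∧ Xpt ε ((ℓ : ℝ) - 1) < (testPoint ε j : ℝ)
    swap
    · have : Ev j = ∅ := by
        ext ω
        simp only [Ev, Set.mem_ofPred_eq, Set.mem_empty_iff_false, iff_false]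
        exact fun h => hc ⟨h.1, h.2.1⟩
      rw [this, measure_empty]
      exact bot_le
    obtain ⟨hj1, hX⟩ := hc
    have hj1' : (1 : ℝ) ≤ j := by exact_mod_cast hj1
    have hj0 : (0 : ℝ) < j := by linarith
    have hBj : B < (j : ℝ) ^ ε := by
      have : Real.exp B < Real.exp ((j : ℝ) ^ ε) :=
        lt_of_lt_of_le hX (Nat.floor_le (Real.exp_pos _).le)
      exact Real.exp_lt_exp.1 this
    have hJj : J ≤ j := by
      have h2 : (j : ℝ) ^ ε ≤ j := by
        calc (j : ℝ) ^ ε ≤ (j : ℝ) ^ (1 : ℝ) :=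
              Real.rpow_le_rpow_of_exponent_le hj1' (by linarith)
          _ = j := Real.rpow_one _
      have : (J : ℝ) ≤ j := by linarith
      exact_mod_cast this
    obtain ⟨r, hu1, hr, hR, hbd⟩ := hJ j hJj
    have hb := block hf (testPoint ε j) (testPoint ε (j + 1)) r hu1 hr
    refine le_trans (measure_mono ?_) (hb.trans (ENNReal.ofReal_le_ofReal (hbd.trans ?_)))
    · rintro ω ⟨-, -, x, hx1, hx2, hx3⟩
      refine ⟨x, hx1, hx2, lt_of_le_of_lt ?_ hx3⟩
      have := Real.sqrt_nonneg (testPoint ε j : ℝ)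
      nlinarith
    · rw [mul_assoc C0]
      refine mul_le_mul_of_nonneg_left ?_ hC0p.le
      have e : (j : ℝ) ^ (-(3 / 2) : ℝ) = (j : ℝ) ^ (-(1 / 3) : ℝ) * (j : ℝ) ^ (-(7 / 6) : ℝ) := by
        rw [← Real.rpow_add hj0]; norm_num
      rw [e]
      refine mul_le_mul_of_nonneg_right ?_ (by positivity)
      calc (j : ℝ) ^ (-(1 / 3) : ℝ) ≤ (j : ℝ) ^ (ε * (-(a / ε))) := by
            refine Real.rpow_le_rpow_of_exponent_le hj1' ?_
            have : ε * (-(a / ε)) = -a := by field_simp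
            rw [this]; linarith
        _ = ((j : ℝ) ^ ε) ^ (-(a / ε)) := Real.rpow_mul hj0.le _ _
        _ ≤ B ^ (-(a / ε)) :=
            Real.rpow_le_rpow_of_nonpos hB0 hBj.le (by
              have : 0 ≤ a / ε := by positivity
              linarith)
        _ = D := hDB.symm
  calc _ ≤ μ (⋃ j, Ev j) := by
        refine measure_mono ?_
        rintro ω ⟨i, hi, h1, -, x, hx⟩
        refine Set.mem_iUnion.2 ⟨i - 1, by omega, h1, x, ?_⟩
        have : i - 1 + 1 = i := by omega
        rw [this]
        exact hx
    _ ≤ ∑' j, μ (Ev j) := measure_iUnion_le _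
    _ ≤ ∑' j : ℕ, ENNReal.ofReal (C0 * D * (j : ℝ) ^ (-(7 / 6) : ℝ)) := ENNReal.tsum_le_tsum hEv
    _ = ENNReal.ofReal (∑' j : ℕ, C0 * D * (j : ℝ) ^ (-(7 / 6) : ℝ)) :=
        (ENNReal.ofReal_tsum_of_nonneg (fun j => by positivity) (hsum.mul_left _)).symm
    _ = ENNReal.ofReal (C0 * S * D) := by
        rw [tsum_mul_left]; congr 1; ring
end
end

section
/- Let f be a Rademacher random multiplicative function and let x ≥ 2. Then for every sample point, x · ∫_0^{+∞} |∑_{m ≤ z, P(m) ≤ x} f(m)|² · z^{−2} dz = (x/(2π)) · ∫_{−∞}^{+∞} |S_x(1/2+it)|² / |1/2+it|² dt, where S_x(1/2+it) := ∏_{p ≤ x, p prime} (1 + f(p)·p^{−1/2−it}). -/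
open MeasureTheory ProbabilityTheory

noncomputable section

/-- The truncated Euler product `S_x(1/2+it) = ∏_{p ≤ x} (1 + f(p) p^{-1/2-it})`. -/
def eulerProd {Ω : Type*} (f : Ω → ℕ → ℝ) (ω : Ω) (x : ℝ) (t : ℝ) : ℂ :=
  ∏ p ∈ (Finset.Icc 1 ⌊x⌋₊).filter Nat.Prime,
    (1 + (f ω p : ℂ) * (p : ℂ) ^ (-(1 / 2 : ℂ) - (t : ℂ) * Complex.I))

/-- Integrability of the Poisson-type kernel. -/
lemma aux_integrable_kernel : Integrable (fun t : ℝ => (1 / 4 + t ^ 2)⁻¹) := by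
  have h := (integrable_inv_one_add_sq.comp_mul_left' (R := (2:ℝ)) (by norm_num)).const_mul 4
  refine h.congr (Filter.Eventually.of_forall fun t => ?_)
  have h1 : (1:ℝ) + (2 * t) ^ 2 ≠ 0 := by positivity
  have h2 : (1:ℝ) / 4 + t ^ 2 ≠ 0 := by positivity
  simp only
  field_simp
  ring

/-- The two-sided exponential. -/
def auxG (v : ℝ) : ℂ := Complex.exp (-(|v| / 2 : ℝ))

lemma auxG_int_Ioi (a : ℝ) :
    IntegrableOn (fun v : ℝ => Complex.exp (a * v * Complex.I) * auxG v) (Set.Ioi 0) ∧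
    ∫ v in Set.Ioi (0:ℝ), Complex.exp (a * v * Complex.I) * auxG v = 1 / (1 / 2 - a * Complex.I) := by
  have hre : (-(1 / 2) + a * Complex.I : ℂ).re < 0 := by simp
  have heq : Set.EqOn (fun v : ℝ => Complex.exp ((-(1 / 2) + a * Complex.I : ℂ) * v))
      (fun v : ℝ => Complex.exp (a * v * Complex.I) * auxG v) (Set.Ioi 0) := by
    intro v hv
    simp only [auxG, ← Complex.exp_add, abs_of_pos (Set.mem_Ioi.1 hv)]
    congr 1; push_cast; ring
  refine ⟨(integrableOn_exp_mul_complex_Ioi hre 0).congr_fun heq measurableSet_Ioi, ?_⟩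
  rw [← setIntegral_congr_fun measurableSet_Ioi heq, integral_exp_mul_complex_Ioi hre]
  simp only [Complex.ofReal_zero, mul_zero, Complex.exp_zero]
  rw [neg_div, ← div_neg]; congr 1; ring

lemma auxG_int_Iic (a : ℝ) :
    IntegrableOn (fun v : ℝ => Complex.exp (a * v * Complex.I) * auxG v) (Set.Iic 0) ∧
    ∫ v in Set.Iic (0:ℝ), Complex.exp (a * v * Complex.I) * auxG v = 1 / (1 / 2 + a * Complex.I) := by
  have hre : 0 < ((1 / 2) + a * Complex.I : ℂ).re := by simp
  have heq : Set.EqOn (fun v : ℝ => Complex.exp (((1 / 2) + a * Complex.I : ℂ) * v))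
      (fun v : ℝ => Complex.exp (a * v * Complex.I) * auxG v) (Set.Iic 0) := by
    intro v hv
    simp only [auxG, ← Complex.exp_add, abs_of_nonpos (Set.mem_Iic.1 hv)]
    congr 1; push_cast; ring
  refine ⟨(integrableOn_exp_mul_complex_Iic hre 0).congr_fun heq measurableSet_Iic, ?_⟩
  rw [← setIntegral_congr_fun measurableSet_Iic heq, integral_exp_mul_complex_Iic hre]
  simp

lemma auxG_int (a : ℝ) :
    Integrable (fun v : ℝ => Complex.exp (a * v * Complex.I) * auxG v) ∧
    ∫ v : ℝ, Complex.exp (a * v * Complex.I) * auxG v = (((1 / 4 + a ^ 2)⁻¹ : ℝ) : ℂ) := by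
  have hi : Integrable (fun v : ℝ => Complex.exp (a * v * Complex.I) * auxG v) := by
    rw [← integrableOn_univ, ← Set.Iic_union_Ioi (a := (0:ℝ))]
    exact (auxG_int_Iic a).1.union (auxG_int_Ioi a).1
  refine ⟨hi, ?_⟩
  rw [← intervalIntegral.integral_Iic_add_Ioi (auxG_int_Iic a).1 (auxG_int_Ioi a).1,
    (auxG_int_Iic a).2, (auxG_int_Ioi a).2]
  have h1 : (1 / 2 + a * Complex.I : ℂ) ≠ 0 := by
    intro h; simpa using congrArg Complex.re h
  have h2 : (1 / 2 - a * Complex.I : ℂ) ≠ 0 := by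
    intro h; simpa using congrArg Complex.re h
  have h3 : (1 / 4 + a ^ 2 : ℂ) = (1 / 2 + a * Complex.I) * (1 / 2 - a * Complex.I) := by
    ring_nf; rw [Complex.I_sq]; ring
  push_cast
  rw [h3, div_add_div _ _ h1 h2, eq_comm, inv_eq_one_div]
  congr 1
  ring

open FourierTransform in
lemma auxG_fourier (w : ℝ) : 𝓕 auxG w = (((1 / 4 + (2 * Real.pi * w) ^ 2)⁻¹ : ℝ) : ℂ) := by
  rw [Real.fourier_real_eq_integral_exp_smul]
  have h := (auxG_int (-(2 * Real.pi * w))).2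
  rw [neg_sq] at h
  rw [← h]
  refine integral_congr_ae (Filter.Eventually.of_forall fun v => ?_)
  simp only [smul_eq_mul]
  congr 2
  push_cast; ring

open FourierTransform in
lemma aux_kernel (a : ℝ) :
    ∫ t : ℝ, Complex.exp (a * t * Complex.I) * (((1 / 4 + t ^ 2)⁻¹ : ℝ) : ℂ)
      = 2 * Real.pi * auxG a := by
  have hcont : Continuous auxG := by unfold auxG; fun_prop
  have hint : Integrable auxG := by simpa using (auxG_int 0).1
  have hF : 𝓕 auxG = fun w : ℝ => (((1 / 4 + (2 * Real.pi * w) ^ 2)⁻¹ : ℝ) : ℂ) :=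
    funext auxG_fourier
  have hFint : Integrable (𝓕 auxG) := by
    rw [hF]
    exact (aux_integrable_kernel.comp_mul_left' (R := 2 * Real.pi) (by positivity)).ofReal
  have h := congrFun (hcont.fourierInv_fourier_eq hint hFint) a
  rw [Real.fourierInv_eq', hF] at h
  have hs := Measure.integral_comp_mul_left
    (fun t : ℝ => Complex.exp (a * t * Complex.I) * (((1 / 4 + t ^ 2)⁻¹ : ℝ) : ℂ)) (2 * Real.pi)
  rw [← h]
  have h2 : ∫ v : ℝ, Complex.exp (↑(2 * Real.pi * inner ℝ v a) * Complex.I) •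
      (((1 / 4 + (2 * Real.pi * v) ^ 2)⁻¹ : ℝ) : ℂ) =
      ∫ v : ℝ, Complex.exp (a * ((2 * Real.pi * v : ℝ) : ℂ) * Complex.I) *
        (((1 / 4 + (2 * Real.pi * v) ^ 2)⁻¹ : ℝ) : ℂ) := by
    refine integral_congr_ae (Filter.Eventually.of_forall fun v => ?_)
    simp only [smul_eq_mul]
    congr 2
    simp
    ring
  rw [h2, hs, abs_of_pos (by positivity)]
  have : (Real.pi : ℂ) ≠ 0 := by exact_mod_cast Real.pi_ne_zero
  rw [Complex.real_smul]
  generalize (∫ t : ℝ, Complex.exp (a * t * Complex.I) * (((1 / 4 + t ^ 2)⁻¹ : ℝ) : ℂ)) = J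
  push_cast
  field_simp

/-- Kernel integral for a pair of positive integers. -/
lemma aux_pair (M N : ℕ) (hM : 0 < M) (hN : 0 < N) :
    Integrable (fun t : ℝ => (M : ℂ) ^ (-(1 / 2 : ℂ) - (t : ℂ) * Complex.I) *
      (starRingEnd ℂ) ((N : ℂ) ^ (-(1 / 2 : ℂ) - (t : ℂ) * Complex.I)) *
        (((1 / 4 + t ^ 2)⁻¹ : ℝ) : ℂ)) ∧
    ∫ t : ℝ, (M : ℂ) ^ (-(1 / 2 : ℂ) - (t : ℂ) * Complex.I) *
      (starRingEnd ℂ) ((N : ℂ) ^ (-(1 / 2 : ℂ) - (t : ℂ) * Complex.I)) *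
        (((1 / 4 + t ^ 2)⁻¹ : ℝ) : ℂ) = ((2 * Real.pi * (max (M:ℝ) N)⁻¹ : ℝ) : ℂ) := by
  have hM' : (0:ℝ) < M := by exact_mod_cast hM
  have hN' : (0:ℝ) < N := by exact_mod_cast hN
  have hkey : ∀ t : ℝ, (M : ℂ) ^ (-(1 / 2 : ℂ) - (t : ℂ) * Complex.I) *
      (starRingEnd ℂ) ((N : ℂ) ^ (-(1 / 2 : ℂ) - (t : ℂ) * Complex.I)) *
        (((1 / 4 + t ^ 2)⁻¹ : ℝ) : ℂ) =
      Complex.exp ((-(Real.log M + Real.log N) / 2 : ℝ)) *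
       (Complex.exp (((Real.log N - Real.log M : ℝ) : ℂ) * t * Complex.I) *
        (((1 / 4 + t ^ 2)⁻¹ : ℝ) : ℂ)) := by
    intro t
    rw [Complex.cpow_def_of_ne_zero (by exact_mod_cast hM.ne'),
      Complex.cpow_def_of_ne_zero (by exact_mod_cast hN.ne'), ← Complex.exp_conj,
      ← mul_assoc, ← Complex.exp_add, ← Complex.exp_add, ← Complex.natCast_log, ← Complex.natCast_log]
    congr 2
    simp only [map_mul, map_sub, map_neg, map_div₀, Complex.conj_ofReal, Complex.conj_I, map_one,
      map_ofNat]
    push_cast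
    ring
  simp only [hkey]
  constructor
  · apply Integrable.const_mul
    refine (aux_integrable_kernel.ofReal (𝕜 := ℂ)).bdd_mul (c := 1) ?_ ?_
    · exact Continuous.aestronglyMeasurable (by fun_prop)
    · refine Filter.Eventually.of_forall fun t => ?_
      rw [← Complex.ofReal_mul, Complex.norm_exp_ofReal_mul_I]
  · rw [integral_const_mul, aux_kernel, auxG, mul_left_comm, ← Complex.exp_add]
    have h : (-(Real.log M + Real.log N) / 2 : ℝ) + (-(|Real.log N - Real.log M| / 2 : ℝ)) =
        - Real.log (max (M:ℝ) N) := by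
      rcases le_total (M:ℝ) N with h | h
      · rw [abs_of_nonneg (sub_nonneg.2 (Real.log_le_log hM' h)), max_eq_right h]; ring
      · rw [abs_of_nonpos (sub_nonpos.2 (Real.log_le_log hN' h)), max_eq_left h]; ring
    rw [← Complex.ofReal_neg, ← Complex.ofReal_add, h, ← Complex.ofReal_exp, Real.exp_neg, Real.exp_log (lt_max_of_lt_left hM')]
    push_cast; ring

/-- The physical-side integral for a pair of positive reals. -/
lemma aux_phys (K : ℝ) (hK : 0 < K) :
    IntegrableOn (fun z : ℝ => if K ≤ z then 1 / z ^ 2 else 0) (Set.Ioi 0) ∧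
    ∫ z in Set.Ioi (0:ℝ), (if K ≤ z then 1 / z ^ 2 else 0) = K⁻¹ := by
  have e : (fun z : ℝ => if K ≤ z then 1 / z ^ 2 else 0) =
      (Set.Ici K).indicator (fun z : ℝ => z ^ (-2 : ℝ)) := by
    ext z
    by_cases h : K ≤ z
    · have hz : 0 < z := hK.trans_le h
      simp [h, Real.rpow_neg hz.le]
    · simp [h]
  have hsub : Set.Ioi (0:ℝ) ∩ Set.Ici K = Set.Ici K :=
    Set.inter_eq_right.2 fun z hz => hK.trans_le hz
  have hi := (integrableOn_Ici_iff_integrableOn_Ioi (μ := volume)).2 (integrableOn_Ioi_rpow_of_lt (a := -2) (by norm_num) hK)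
  rw [e]
  refine ⟨((integrable_indicator_iff measurableSet_Ici).2 hi).integrableOn, ?_⟩
  rw [setIntegral_indicator measurableSet_Ici, hsub, integral_Ici_eq_integral_Ioi,
    integral_Ioi_rpow_of_lt (by norm_num) hK]
  norm_num [Real.rpow_neg_one]

/-- The set of primes up to `x`. -/
def auxA (x : ℝ) : Finset ℕ := (Finset.Icc 1 ⌊x⌋₊).filter Nat.Prime

lemma auxA_prime {x : ℝ} {T : Finset ℕ} (hT : T ∈ (auxA x).powerset) :
    ∀ p ∈ T, p.Prime := fun p hp =>
  (Finset.mem_filter.1 (Finset.mem_powerset.1 hT hp)).2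

lemma aux_prod_pos {x : ℝ} {T : Finset ℕ} (hT : T ∈ (auxA x).powerset) :
    0 < ∏ p ∈ T, p := Finset.prod_pos fun p hp => (auxA_prime hT p hp).pos

lemma aux_sqfree {x : ℝ} {T : Finset ℕ} (hT : T ∈ (auxA x).powerset) :
    Squarefree (∏ p ∈ T, p) := by
  refine Finset.squarefree_prod_of_pairwise_isCoprime ?_ ?_
  · intro p hp q hq hpq
    exact Nat.coprime_iff_isRelPrime.1
      ((Nat.coprime_primes (auxA_prime hT p hp) (auxA_prime hT q hq)).2 hpq)
  · intro p hp
    exact (auxA_prime hT p hp).prime.squarefree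

lemma aux_Pfac_le (x : ℝ) (hx : 2 ≤ x) (m : ℕ) (hm : 1 ≤ m) :
    (Pfac m : ℝ) ≤ x ↔ m.primeFactors ⊆ auxA x := by
  have hx0 : 0 ≤ x := by linarith
  rw [← Nat.le_floor_iff hx0]
  unfold Pfac auxA
  split_ifs with h
  · have : m = 1 := by omega
    subst this
    simp [Nat.le_floor_iff hx0]; linarith
  · rw [Finset.sup_le_iff]
    constructor
    · intro H p hp
      have := Nat.prime_of_mem_primeFactors hp
      simp only [Finset.mem_filter, Finset.mem_Icc]
      exact ⟨⟨this.one_le, H p hp⟩, this⟩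
    · intro H p hp
      have := H hp
      simp only [Finset.mem_filter, Finset.mem_Icc] at this
      exact this.1.2

lemma aux_sum {Ω : Type*} [MeasurableSpace Ω] (μ : Measure Ω)
    (f : Ω → ℕ → ℝ) (hf : IsRademacherRMF μ f) (x : ℝ) (hx : 2 ≤ x) (ω : Ω) (z : ℝ) (hz : 0 < z) :
    ∑ m ∈ (Finset.Icc 1 ⌊z⌋₊).filter (fun m : ℕ => (Pfac m : ℝ) ≤ x), f ω m =
      ∑ T ∈ (auxA x).powerset, if ((∏ p ∈ T, p : ℕ) : ℝ) ≤ z then ∏ p ∈ T, f ω p else 0 := by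
  rw [← Finset.sum_filter]
  rw [← Finset.sum_filter_of_ne (p := fun m : ℕ => Squarefree m) (s := (Finset.Icc 1 ⌊z⌋₊).filter _)]
  swap
  · intro m _ h
    by_contra h'
    exact h (hf.eq_zero_of_not_squarefree ω m h')
  refine Finset.sum_bij' (fun m _ => m.primeFactors) (fun T _ => ∏ p ∈ T, p) ?_ ?_ ?_ ?_ ?_
  · intro m hm
    simp only [Finset.mem_filter, Finset.mem_Icc] at hm
    obtain ⟨⟨⟨h1, h2⟩, h3⟩, h4⟩ := hm
    rw [Finset.mem_filter, Finset.mem_powerset, Nat.prod_primeFactors_of_squarefree h4]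
    exact ⟨(aux_Pfac_le x hx m h1).1 h3, (Nat.le_floor_iff hz.le).1 h2⟩
  · intro T hT
    obtain ⟨h1, h2⟩ := Finset.mem_filter.1 hT
    have hpos := aux_prod_pos h1
    simp only [Finset.mem_filter, Finset.mem_Icc]
    refine ⟨⟨⟨hpos, (Nat.le_floor_iff hz.le).2 h2⟩, ?_⟩, aux_sqfree h1⟩
    rw [aux_Pfac_le x hx _ hpos, Nat.primeFactors_prod (auxA_prime h1)]
    exact Finset.mem_powerset.1 h1
  · intro m hm
    exact Nat.prod_primeFactors_of_squarefree (Finset.mem_filter.1 hm).2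
  · intro T hT
    exact Nat.primeFactors_prod (auxA_prime (Finset.mem_filter.1 hT).1)
  · intro m hm
    exact hf.eq_prod_of_squarefree ω m (Finset.mem_filter.1 hm).2

lemma aux_cpow_prod (T : Finset ℕ) (s : ℂ) :
    ∏ p ∈ T, (p : ℂ) ^ s = ((∏ p ∈ T, p : ℕ) : ℂ) ^ s := by
  induction T using Finset.induction_on with
  | empty => simp
  | insert a T ha ih =>
    rw [Finset.prod_insert ha, Finset.prod_insert ha, ih, Nat.cast_mul, Complex.natCast_mul_natCast_cpow]

lemma aux_euler {Ω : Type*} (f : Ω → ℕ → ℝ) (ω : Ω) (x t : ℝ) :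
    eulerProd f ω x t = ∑ T ∈ (auxA x).powerset, ((∏ p ∈ T, f ω p : ℝ) : ℂ) *
      ((∏ p ∈ T, p : ℕ) : ℂ) ^ (-(1 / 2 : ℂ) - (t : ℂ) * Complex.I) := by
  unfold eulerProd
  rw [Finset.prod_one_add]
  refine Finset.sum_congr rfl fun T _ => ?_
  rw [Finset.prod_mul_distrib, aux_cpow_prod]
  push_cast; rfl

/-- Pathwise Parseval identity:
`x ∫_0^∞ |∑_{m ≤ z, P(m) ≤ x} f(m)|² z⁻² dz
  = (x/(2π)) ∫_ℝ |S_x(1/2+it)|²/|1/2+it|² dt`. -/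
theorem pathwise_parseval_rademacher
    {Ω : Type*} [MeasurableSpace Ω] (μ : Measure Ω) [IsProbabilityMeasure μ]
    (f : Ω → ℕ → ℝ) (hf : IsRademacherRMF μ f) (x : ℝ) (hx : 2 ≤ x) (ω : Ω) :
    x * ∫ z in Set.Ioi (0 : ℝ),
        (∑ m ∈ (Finset.Icc 1 ⌊z⌋₊).filter (fun m : ℕ => (Pfac m : ℝ) ≤ x), f ω m) ^ 2 / z ^ 2 =
      (x / (2 * Real.pi)) * ∫ t : ℝ,
        ‖eulerProd f ω x t‖ ^ 2 / ‖(1 / 2 : ℂ) + (t : ℂ) * Complex.I‖ ^ 2 := by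
  have hL : ∫ z in Set.Ioi (0 : ℝ),
        (∑ m ∈ (Finset.Icc 1 ⌊z⌋₊).filter (fun m : ℕ => (Pfac m : ℝ) ≤ x), f ω m) ^ 2 / z ^ 2 =
      ∑ S ∈ (auxA x).powerset, ∑ T ∈ (auxA x).powerset, (∏ p ∈ S, f ω p) * (∏ p ∈ T, f ω p) *
        (max ((∏ p ∈ S, p : ℕ) : ℝ) ((∏ p ∈ T, p : ℕ) : ℝ))⁻¹ := by
    have hpos : ∀ S ∈ (auxA x).powerset, ∀ T ∈ (auxA x).powerset,
        0 < max ((∏ p ∈ S, p : ℕ) : ℝ) ((∏ p ∈ T, p : ℕ) : ℝ) := fun S hS T _ =>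
      lt_max_of_lt_left (by exact_mod_cast aux_prod_pos hS)
    have h1 : ∀ z ∈ Set.Ioi (0:ℝ),
        (∑ m ∈ (Finset.Icc 1 ⌊z⌋₊).filter (fun m : ℕ => (Pfac m : ℝ) ≤ x), f ω m) ^ 2 / z ^ 2 =
        ∑ S ∈ (auxA x).powerset, ∑ T ∈ (auxA x).powerset, (∏ p ∈ S, f ω p) * (∏ p ∈ T, f ω p) *
        (if max ((∏ p ∈ S, p : ℕ) : ℝ) ((∏ p ∈ T, p : ℕ) : ℝ) ≤ z then 1 / z ^ 2 else 0) := by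
      intro z hz
      rw [aux_sum μ f hf x hx ω z hz, sq, Finset.sum_mul_sum, Finset.sum_div]
      refine Finset.sum_congr rfl fun S _ => ?_
      rw [Finset.sum_div]
      refine Finset.sum_congr rfl fun T _ => ?_
      simp only [max_le_iff]
      by_cases hS : ((∏ p ∈ S, p : ℕ) : ℝ) ≤ z
      · by_cases hT : ((∏ p ∈ T, p : ℕ) : ℝ) ≤ z
        · rw [if_pos hS, if_pos hT, if_pos ⟨hS, hT⟩, mul_one_div]
        · rw [if_neg hT, if_neg (fun h : ((∏ p ∈ S, p : ℕ) : ℝ) ≤ z ∧ ((∏ p ∈ T, p : ℕ) : ℝ) ≤ z => hT h.2)]; simp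
      · rw [if_neg hS, if_neg (fun h : ((∏ p ∈ S, p : ℕ) : ℝ) ≤ z ∧ ((∏ p ∈ T, p : ℕ) : ℝ) ≤ z => hS h.1)]; simp
    rw [setIntegral_congr_fun measurableSet_Ioi h1, integral_finsetSum]
    · refine Finset.sum_congr rfl fun S hS => ?_
      rw [integral_finsetSum]
      · refine Finset.sum_congr rfl fun T hT => ?_
        rw [integral_const_mul, (aux_phys _ (hpos S hS T hT)).2]
      · intro T hT
        exact (aux_phys _ (hpos S hS T hT)).1.const_mul _
    · intro S hS
      refine integrable_finsetSum _ fun T hT => ?_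
      exact (aux_phys _ (hpos S hS T hT)).1.const_mul _
  have hR : ∫ t : ℝ, ‖eulerProd f ω x t‖ ^ 2 / ‖(1 / 2 : ℂ) + (t : ℂ) * Complex.I‖ ^ 2 =
      ∑ S ∈ (auxA x).powerset, ∑ T ∈ (auxA x).powerset, (∏ p ∈ S, f ω p) * (∏ p ∈ T, f ω p) *
        (2 * Real.pi * (max ((∏ p ∈ S, p : ℕ) : ℝ) ((∏ p ∈ T, p : ℕ) : ℝ))⁻¹) := by
    apply Complex.ofReal_injective
    rw [← integral_complex_ofReal]
    have h1 : ∀ t : ℝ, ((‖eulerProd f ω x t‖ ^ 2 / ‖(1 / 2 : ℂ) + (t : ℂ) * Complex.I‖ ^ 2 : ℝ) : ℂ) =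
        ∑ S ∈ (auxA x).powerset, ∑ T ∈ (auxA x).powerset,
          (((∏ p ∈ S, f ω p) * (∏ p ∈ T, f ω p) : ℝ) : ℂ) *
          (((∏ p ∈ S, p : ℕ) : ℂ) ^ (-(1 / 2 : ℂ) - (t : ℂ) * Complex.I) *
      (starRingEnd ℂ) (((∏ p ∈ T, p : ℕ) : ℂ) ^ (-(1 / 2 : ℂ) - (t : ℂ) * Complex.I)) *
        (((1 / 4 + t ^ 2)⁻¹ : ℝ) : ℂ)) := by
      intro t
      have hd : ‖(1 / 2 : ℂ) + (t : ℂ) * Complex.I‖ ^ 2 = 1 / 4 + t ^ 2 := by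
        rw [← Complex.normSq_eq_norm_sq, Complex.normSq_apply]
        simp
        ring
      rw [hd, div_eq_mul_inv, Complex.ofReal_mul, ← Complex.normSq_eq_norm_sq, Complex.normSq_eq_conj_mul_self, mul_comm ((starRingEnd ℂ) _),
        aux_euler, map_sum, Finset.sum_mul_sum, Finset.sum_mul]
      refine Finset.sum_congr rfl fun S _ => ?_
      rw [Finset.sum_mul]
      refine Finset.sum_congr rfl fun T _ => ?_
      rw [map_mul, Complex.conj_ofReal, Complex.ofReal_mul]
      ring
    simp only [h1]
    rw [integral_finsetSum, Complex.ofReal_sum]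
    · refine Finset.sum_congr rfl fun S hS => ?_
      rw [integral_finsetSum, Complex.ofReal_sum]
      · refine Finset.sum_congr rfl fun T hT => ?_
        rw [integral_const_mul, (aux_pair _ _ (aux_prod_pos hS) (aux_prod_pos hT)).2,
          ← Complex.ofReal_mul]
      · intro T hT
        exact (aux_pair _ _ (aux_prod_pos hS) (aux_prod_pos hT)).1.const_mul _
    · intro S hS
      refine integrable_finsetSum _ fun T hT => ?_
      exact (aux_pair _ _ (aux_prod_pos hS) (aux_prod_pos hT)).1.const_mul _
  rw [hL, hR, Finset.mul_sum, Finset.mul_sum]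
  refine Finset.sum_congr rfl fun S _ => ?_
  rw [Finset.mul_sum, Finset.mul_sum]
  refine Finset.sum_congr rfl fun T _ => ?_
  have := Real.pi_ne_zero
  generalize (max ((∏ p ∈ S, p : ℕ) : ℝ) ((∏ p ∈ T, p : ℕ) : ℝ))⁻¹ = K
  field_simp
end
end
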